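/- For every θ ∈ Θ_M° and every x ∈ ℝ, the stable density is strictly positive: f(x;θ) > 0. -/

import Mathlib

open MeasureTheory Filter

noncomputable section

def ThetaInt : Set (Fin 4 → ℝ) :=
  {θ | 0 < θ 1 ∧ θ 2 ∈ Set.Ioo (0:ℝ) 2 ∧ θ 3 ∈ Set.Ioo (-1:ℝ) 1}

/-- Cumulant (log characteristic function) of the continuous (M₀) parameterization,
with `θ = (μ, σ, α, β)`. -/
def psiM (θ : Fin 4 → ℝ) (t : ℝ) : ℂ :=
  if θ 2 = 1 then
    ((-(|θ 1 * t|) : ℝ) : ℂ)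
      - Complex.I * (((2 * θ 3 / Real.pi) * (θ 1 * t) * Real.log |θ 1 * t| : ℝ) : ℂ)
      + Complex.I * ((θ 0 * t : ℝ) : ℂ)
  else
    ((-(|θ 1 * t| ^ (θ 2)) : ℝ) : ℂ) *
        (1 + Complex.I * ((θ 3 * Real.sign t * Real.tan (Real.pi * θ 2 / 2)
            * (|θ 1 * t| ^ (1 - θ 2) - 1) : ℝ) : ℂ))
      + Complex.I * ((θ 0 * t : ℝ) : ℂ)

/-- Characteristic function of the (M₀) parameterization. -/
def phiM (θ : Fin 4 → ℝ) (t : ℝ) : ℂ := Complex.exp (psiM θ t)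

/-- Stable density in the (M₀) parameterization, via Fourier inversion. -/
def fM (θ : Fin 4 → ℝ) (x : ℝ) : ℝ :=
  (1 / (2 * Real.pi)) *
    (∫ t : ℝ, Complex.exp (-Complex.I * (t : ℂ) * (x : ℂ)) * phiM θ t).re

/-- Partial derivative of the density in parameter `i`. -/
def fP (i : Fin 4) (θ : Fin 4 → ℝ) (x : ℝ) : ℝ :=
  deriv (fun s => fM (Function.update θ i s) x) (θ i)

/-- Second partial derivative of the density in parameters `i`, `j`. -/
def fPP (i j : Fin 4) (θ : Fin 4 → ℝ) (x : ℝ) : ℝ :=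
  deriv (fun s => fP i (Function.update θ j s) x) (θ j)

/-- Derivative of the density in `x`. -/
def fX (θ : Fin 4 → ℝ) (x : ℝ) : ℝ := deriv (fun y => fM θ y) x

/-- Mixed derivative `∂²f/∂x∂θᵢ`. -/
def fPX (i : Fin 4) (θ : Fin 4 → ℝ) (x : ℝ) : ℝ := deriv (fun y => fP i θ y) x

/-- Score functions. -/
def ellP (i : Fin 4) (θ : Fin 4 → ℝ) (x : ℝ) : ℝ := fP i θ x / fM θ x

/-- Derivative of the score in `x`. -/
def ellPX (i : Fin 4) (θ : Fin 4 → ℝ) (x : ℝ) : ℝ := deriv (fun y => ellP i θ y) x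

/-- Derivative of the score `ℓ_{θᵢ}` in the parameter `θⱼ`. -/
def ellPP (i j : Fin 4) (θ : Fin 4 → ℝ) (x : ℝ) : ℝ :=
  deriv (fun s => ellP i (Function.update θ j s) x) (θ j)

/-- `h = O(r)` as `|x| → ∞`. -/
def IsBigOAtInfty (h r : ℝ → ℝ) : Prop :=
  ∃ c > 0, ∃ M > 0, ∀ x : ℝ, M ≤ |x| → |h x| ≤ c * r x


end

/-!
A stable law with `|β| < 1` is the limit, as `ε → 0`, of shifted infinitely divisible laws whose
Lévy measure has density `p * x ^ (-α - 1) * exp (-ε * x)` on the positive half-line and, with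
another weight `q > 0`, its mirror image on the negative one. For `ε ≤ 1` these Lévy measures all
dominate the same multiple `κ` of the standard Gaussian law `γ`, and `κ • γ` can be split off
before passing to the limit: the stable law is the convolution of a probability measure `μ` with
the compound Poisson law `exp (-κ) * ∑ (κ γ)^{∗n} / n!`. Its term `n = 1` alone contributes a
multiple of `μ ∗ γ`, which has an everywhere positive density, while by Fourier inversion the
remainder contributes a nonnegative amount.
-/

open ProbabilityTheory Topology
open scoped NNReal ENNReal Real

section CharacteristicFunctions

variable {E : Type*} [NormedAddCommGroup E] [InnerProductSpace ℝ E] [MeasurableSpace E]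
  [BorelSpace E]

/-- `φ` is the characteristic function of a probability measure on `E`. -/
def IsCharFun (φ : E → ℂ) : Prop :=
  ∃ μ : Measure E, IsProbabilityMeasure μ ∧ charFun μ = φ

lemma IsCharFun.mul [SecondCountableTopology E] {φ ψ : E → ℂ} (hφ : IsCharFun φ)
    (hψ : IsCharFun ψ) : IsCharFun (φ * ψ) := by
  obtain ⟨μ, hμ, rfl⟩ := hφ
  obtain ⟨ν, hν, rfl⟩ := hψ
  exact ⟨μ ∗ ν, inferInstance, funext charFun_conv⟩

lemma isCharFun_cexp_inner_mul_I (a : E) :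
    IsCharFun fun t : E => Complex.exp (inner ℝ a t * Complex.I) :=
  ⟨Measure.dirac a, inferInstance, funext charFun_dirac⟩

-- Continuity at `0` of the limit yields tightness, hence a cluster point of the measures.
lemma IsCharFun.of_tendsto [FiniteDimensional ℝ E] {φ : ℕ → E → ℂ} {ψ : E → ℂ}
    (hφ : ∀ n, IsCharFun (φ n)) (hψ : ContinuousAt ψ 0)
    (hlim : ∀ t, Tendsto (fun n => φ n t) atTop (𝓝 (ψ t))) : IsCharFun ψ := by
  choose μ hμ hμφ using hφ
  obtain rfl : (fun n => charFun (μ n)) = φ := funext hμφ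
  let P : ℕ → ProbabilityMeasure E := fun n => ⟨μ n, hμ n⟩
  have hcompact : IsCompact (closure (Set.range P)) := by
    refine isCompact_closure_of_isTightMeasureSet ?_
    convert isTightMeasureSet_of_tendsto_charFun hψ hlim using 1
    ext ν
    exact Set.exists_range_iff
  let U : Ultrafilter ℕ := Ultrafilter.of atTop
  obtain ⟨ν, -, hν⟩ : ∃ ν ∈ closure (Set.range P), Tendsto P U (𝓝 ν) :=
    hcompact.ultrafilter_le_nhds (U.map P) <|
      tendsto_principal.2 (Eventually.of_forall fun n => subset_closure ⟨n, rfl⟩)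
  refine ⟨ν, inferInstance, funext fun t => ?_⟩
  rw [ProbabilityMeasure.tendsto_iff_forall_integral_rclike_tendsto ℂ] at hν
  have hνt := hν (BoundedContinuousFunction.innerProbChar t)
  simp_rw [← charFun_eq_integral_innerProbChar] at hνt
  exact tendsto_nhds_unique hνt ((hlim t).mono_left (Ultrafilter.of_le atTop))

lemma integrable_cexp_inner_mul_I (μ : Measure E) [SecondCountableTopology E] [IsFiniteMeasure μ]
    (t : E) :
    Integrable (fun x : E => Complex.exp (inner ℝ x t * Complex.I)) μ :=
  .of_bound (by fun_prop) 1 <| .of_forall fun x => (Complex.norm_exp_ofReal_mul_I _).le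

lemma charFun_add (μ ν : Measure E) [SecondCountableTopology E] [IsFiniteMeasure μ]
    [IsFiniteMeasure ν] : charFun (μ + ν) = charFun μ + charFun ν :=
  funext fun t => integral_add_measure (integrable_cexp_inner_mul_I μ t)
    (integrable_cexp_inner_mul_I ν t)

lemma charFun_smul {E : Type*} [NormedAddCommGroup E] [InnerProductSpace ℝ E] [MeasurableSpace E]
    (c : ℝ≥0∞) (μ : Measure E) (t : E) :
    charFun (c • μ) t = c.toReal * charFun μ t := by
  simp [charFun_apply, integral_smul_measure]

end CharacteristicFunctions

section ConvolutionExponential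

variable {E : Type*} [MeasurableSpace E]

lemma conv_le_conv_left [AddMonoid E] [MeasurableAdd₂ E] (μ : Measure E) {ν ρ : Measure E}
    [SFinite ρ] (h : ν ≤ ρ) : μ ∗ ν ≤ μ ∗ ρ :=
  Measure.map_mono (Measure.prod_mono le_rfl h) (by fun_prop)

/-- The `n`-fold convolution power `ν ∗ ⋯ ∗ ν`, with `convPow ν 0 = δ₀`. -/
noncomputable def convPow [AddMonoid E] (ν : Measure E) : ℕ → Measure E
  | 0 => Measure.dirac 0
  | n + 1 => convPow ν n ∗ ν

/-- The exponential `∑ ν^{∗n} / n!` of `ν` in the convolution algebra of measures; up to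
normalization it is a compound Poisson law. -/
noncomputable def convExp [AddMonoid E] (ν : Measure E) : Measure E :=
  Measure.sum fun n : ℕ => (n.factorial : ℝ≥0∞)⁻¹ • convPow ν n

section Mass

variable [AddMonoid E] [MeasurableAdd₂ E] (ν : Measure E) [IsFiniteMeasure ν]

instance (n : ℕ) : IsFiniteMeasure (convPow ν n) := by
  induction n with
  | zero => exact inferInstanceAs (IsFiniteMeasure (Measure.dirac 0))
  | succ n ih => exact inferInstanceAs (IsFiniteMeasure (convPow ν n ∗ ν))

lemma convPow_univ (n : ℕ) : convPow ν n Set.univ = ν Set.univ ^ n := by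
  induction n with
  | zero => simp [convPow]
  | succ n ih =>
    rw [convPow, Measure.conv, Measure.map_apply (by fun_prop) .univ, Set.preimage_univ,
      ← Set.univ_prod_univ, Measure.prod_prod, ih, pow_succ]

lemma convExp_univ : convExp ν Set.univ = ENNReal.ofReal (Real.exp (ν.real Set.univ)) := by
  have hterm (n : ℕ) : (n.factorial : ℝ≥0∞)⁻¹ * ν Set.univ ^ n
      = ENNReal.ofReal (ν.real Set.univ ^ n / n.factorial) := by
    rw [ENNReal.ofReal_div_of_pos (by positivity), ENNReal.ofReal_pow measureReal_nonneg,
      ofReal_measureReal, ENNReal.ofReal_natCast, mul_comm, ENNReal.div_eq_inv_mul, mul_comm]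
  have hsum := NormedSpace.expSeries_div_hasSum_exp (ν.real Set.univ)
  simp only [convExp, Measure.sum_apply _ .univ, Measure.smul_apply, convPow_univ, smul_eq_mul,
    hterm]
  rw [← ENNReal.ofReal_tsum_of_nonneg (fun n => by positivity) hsum.summable, hsum.tsum_eq,
    Real.exp_eq_exp_ℝ]

instance : IsFiniteMeasure (convExp ν) :=
  ⟨by rw [convExp_univ]; exact ENNReal.ofReal_lt_top⟩

lemma le_convExp : ν ≤ convExp ν := by
  simpa [convExp, convPow] using
    Measure.le_sum (fun n : ℕ => (n.factorial : ℝ≥0∞)⁻¹ • convPow ν n) 1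

end Mass

variable [NormedAddCommGroup E] [InnerProductSpace ℝ E] [BorelSpace E] [SecondCountableTopology E]
  (ν : Measure E) [IsFiniteMeasure ν]

lemma charFun_convPow (n : ℕ) (t : E) : charFun (convPow ν n) t = charFun ν t ^ n := by
  induction n with
  | zero => simp [convPow]
  | succ n ih => rw [convPow, charFun_conv, ih, pow_succ]

lemma charFun_convExp (t : E) : charFun (convExp ν) t = Complex.exp (charFun ν t) := by
  have hsum := hasSum_integral_measure (integrable_cexp_inner_mul_I (convExp ν) t)
  have hterm (n : ℕ) : charFun ((n.factorial : ℝ≥0∞)⁻¹ • convPow ν n) t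
      = charFun ν t ^ n / n.factorial := by
    rw [charFun_smul, charFun_convPow]
    simp [div_eq_inv_mul]
  rw [Complex.exp_eq_exp_ℂ]
  refine hsum.unique ?_
  simpa only [← charFun_apply, hterm] using
    NormedSpace.expSeries_div_hasSum_exp (charFun ν t)

lemma isCharFun_cexp_charFun_sub :
    IsCharFun fun t : E => Complex.exp (charFun ν t - charFun ν 0) := by
  set c : ℝ := ν.real Set.univ with hc
  refine ⟨ENNReal.ofReal (Real.exp (-c)) • convExp ν, ⟨?_⟩, funext fun t => ?_⟩
  · rw [Measure.smul_apply, convExp_univ, smul_eq_mul, ← ENNReal.ofReal_mul (by positivity),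
      ← Real.exp_add, ← hc, neg_add_cancel, Real.exp_zero, ENNReal.ofReal_one]
  · rw [charFun_smul, charFun_convExp, charFun_zero, ← hc, sub_eq_neg_add, Complex.exp_add,
      ENNReal.toReal_ofReal (by positivity)]
    simp

end ConvolutionExponential

section FourierInversion

/-- The Fourier inversion integral of `φ` at `x`, without the factor `1 / (2π)`. -/
noncomputable def inversionIntegral (φ : ℝ → ℂ) (x : ℝ) : ℂ :=
  ∫ t : ℝ, Complex.exp (-Complex.I * t * x) * φ t

lemma norm_cexp_neg_I_mul_mul (t x : ℝ) : ‖Complex.exp (-Complex.I * t * x)‖ = 1 := by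
  simp [Complex.norm_exp]

lemma integrable_cexp_neg_I_mul {φ : ℝ → ℂ} (hφ : Integrable φ) (x : ℝ) :
    Integrable fun t : ℝ => Complex.exp (-Complex.I * t * x) * φ t :=
  hφ.bdd_mul (c := 1) (by fun_prop) (.of_forall fun t => (norm_cexp_neg_I_mul_mul t x).le)

lemma norm_charFun_gaussianReal (y : ℝ) (v : ℝ≥0) (t : ℝ) :
    ‖charFun (gaussianReal y v) t‖ = Real.exp (-(v / 2) * t ^ 2) := by
  rw [charFun_gaussianReal, Complex.norm_exp]
  have hexp : (t * y * Complex.I - (v : ℝ) * t ^ 2 / 2 : ℂ)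
      = ((-(v / 2) * t ^ 2 : ℝ) : ℂ) + ((t * y : ℝ) : ℂ) * Complex.I := by
    push_cast
    ring
  simp only [hexp, Complex.add_re, Complex.ofReal_re, Complex.re_ofReal_mul, Complex.I_re,
    mul_zero, add_zero]

lemma inversionIntegral_charFun_gaussianReal (y : ℝ) {v : ℝ≥0} (hv : v ≠ 0) (x : ℝ) :
    inversionIntegral (charFun (gaussianReal y v)) x
      = ((2 * π * gaussianPDFReal y v x : ℝ) : ℂ) := by
  have hsqrt : √(π / (v / 2)) = 2 * π * (√(2 * π * v))⁻¹ := by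
    rw [← div_eq_mul_inv, Real.sqrt_eq_iff_mul_self_eq (by positivity) (by positivity)]
    field_simp
    rw [Real.sq_sqrt (by positivity)]
  calc inversionIntegral (charFun (gaussianReal y v)) x
      = ∫ t : ℝ, Complex.exp (Complex.I * ((y - x : ℝ) : ℂ) * t)
          * Complex.exp (-((v / 2 : ℝ) : ℂ) * t ^ 2) := by
        refine integral_congr_ae (.of_forall fun t => ?_)
        simp only [charFun_gaussianReal, ← Complex.exp_add]
        congr 1
        push_cast
        ring
    _ = ((√(π / (v / 2)) * Real.exp (-(y - x) ^ 2 / (4 * (v / 2))) : ℝ) : ℂ) := by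
        rw [fourierIntegral_gaussian (by rw [Complex.ofReal_re]; positivity), Real.sqrt_eq_rpow]
        push_cast [Complex.ofReal_cpow (show 0 ≤ π / ((v : ℝ) / 2) by positivity)]
        rfl
    _ = ((2 * π * gaussianPDFReal y v x : ℝ) : ℂ) := by
        rw [hsqrt, gaussianPDFReal, mul_assoc, ← neg_sub x y, neg_sq]
        congr 5
        ring

variable (μ : Measure ℝ) [IsFiniteMeasure μ]

lemma charFun_conv_gaussianReal (v : ℝ≥0) (t : ℝ) :
    charFun (μ ∗ gaussianReal 0 v) t = ∫ y, charFun (gaussianReal y v) t ∂μ := by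
  rw [charFun_conv, charFun_apply_real, ← integral_mul_const]
  refine integral_congr_ae (.of_forall fun y => ?_)
  simp only [charFun_gaussianReal, ← Complex.exp_add]
  congr 1
  push_cast
  ring

lemma inversionIntegral_charFun_conv_gaussianReal {v : ℝ≥0} (hv : v ≠ 0) (x : ℝ) :
    inversionIntegral (charFun (μ ∗ gaussianReal 0 v)) x
      = ((2 * π * ∫ y, gaussianPDFReal y v x ∂μ : ℝ) : ℂ) := by
  have hgauss : Integrable fun t : ℝ => Real.exp (-(v / 2) * t ^ 2) :=
    integrable_exp_neg_mul_sq (by positivity)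
  have hprod : Integrable (Function.uncurry fun t y : ℝ =>
      Complex.exp (-Complex.I * t * x) * charFun (gaussianReal y v) t) (volume.prod μ) := by
    refine (hgauss.comp_fst μ).mono' ?_ (.of_forall fun p => ?_)
    · simp only [charFun_gaussianReal]
      exact Continuous.aestronglyMeasurable (by fun_prop)
    · simp only [Function.uncurry, norm_mul, norm_cexp_neg_I_mul_mul, one_mul,
        norm_charFun_gaussianReal, le_refl]
  simp only [inversionIntegral, charFun_conv_gaussianReal, ← integral_const_mul]
  rw [integral_integral_swap hprod, ← integral_complex_ofReal]
  exact integral_congr_ae (.of_forall fun y => inversionIntegral_charFun_gaussianReal y hv x)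

lemma integrable_gaussianPDFReal_left (v : ℝ≥0) (x : ℝ) :
    Integrable (fun y => gaussianPDFReal y v x) μ := by
  refine .of_bound (C := (√(2 * π * v))⁻¹) ?_ (.of_forall fun y => ?_)
  · unfold gaussianPDFReal
    fun_prop
  · rw [Real.norm_of_nonneg (gaussianPDFReal_nonneg y v x), gaussianPDFReal]
    refine mul_le_of_le_one_right (by positivity) (Real.exp_le_one_iff.2 ?_)
    rw [neg_div, neg_nonpos]
    positivity

lemma inversionIntegral_charFun_conv_gaussianReal_re_nonneg {v : ℝ≥0} (hv : v ≠ 0) (x : ℝ) :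
    0 ≤ (inversionIntegral (charFun (μ ∗ gaussianReal 0 v)) x).re := by
  rw [inversionIntegral_charFun_conv_gaussianReal μ hv, Complex.ofReal_re]
  exact mul_nonneg (by positivity) (integral_nonneg fun y => gaussianPDFReal_nonneg y v x)

variable {μ} {ρ : Measure ℝ} [IsFiniteMeasure ρ]

lemma inversionIntegral_charFun_conv_gaussianReal_re_pos (hμ : μ ≠ 0) {v : ℝ≥0} (hv : v ≠ 0)
    (x : ℝ) : 0 < (inversionIntegral (charFun (μ ∗ gaussianReal 0 v)) x).re := by
  rw [inversionIntegral_charFun_conv_gaussianReal μ hv, Complex.ofReal_re]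
  refine mul_pos (by positivity) ?_
  rw [integral_pos_iff_support_of_nonneg (fun y => gaussianPDFReal_nonneg y v x)
    (integrable_gaussianPDFReal_left μ v x)]
  have hsupp : (Function.support fun y => gaussianPDFReal y v x) = Set.univ :=
    Set.eq_univ_of_forall fun y => (gaussianPDFReal_pos y v x hv).ne'
  rwa [hsupp, Measure.measure_univ_pos]

lemma inversionIntegral_charFun_re_nonneg (hint : Integrable (charFun μ)) (x : ℝ) :
    0 ≤ (inversionIntegral (charFun μ) x).re := by
  let v : ℕ → ℝ≥0 := fun n => 1 / ((n : ℝ≥0) + 1)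
  have hlim : Tendsto (fun n => inversionIntegral (charFun (μ ∗ gaussianReal 0 (v n))) x) atTop
      (𝓝 (inversionIntegral (charFun μ) x)) := by
    refine tendsto_integral_of_dominated_convergence (fun t => ‖charFun μ t‖) (fun n => ?_)
      hint.norm (fun n => .of_forall fun t => ?_) (.of_forall fun t => ?_)
    · exact Continuous.aestronglyMeasurable (by fun_prop)
    · rw [norm_mul, norm_cexp_neg_I_mul_mul, one_mul, charFun_conv, norm_mul]
      exact mul_le_of_le_one_right (norm_nonneg _) (norm_charFun_le_one t)
    · have hv : Tendsto (fun n => (v n : ℂ)) atTop (𝓝 0) := by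
        simpa [v] using tendsto_one_div_add_atTop_nhds_zero_nat (𝕜 := ℂ)
      simp only [charFun_conv, charFun_gaussianReal]
      have h := (((hv.mul_const (t ^ 2 : ℂ)).div_const 2).const_sub (t * (0 : ℝ) * Complex.I)).cexp
      simpa using (h.const_mul (charFun μ t)).const_mul (Complex.exp (-Complex.I * t * x))
  exact ge_of_tendsto' (Complex.continuous_re.tendsto _ |>.comp hlim) fun n =>
    inversionIntegral_charFun_conv_gaussianReal_re_nonneg μ (by positivity) x

lemma inversionIntegral_charFun_re_pos_of_conv_gaussianReal_le (hμ : μ ≠ 0) {v : ℝ≥0} (hv : v ≠ 0)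
    (hle : μ ∗ gaussianReal 0 v ≤ ρ) (hint : Integrable (charFun ρ)) (x : ℝ) :
    0 < (inversionIntegral (charFun ρ) x).re := by
  set τ := μ ∗ gaussianReal 0 v
  have hintτ : Integrable (charFun τ) := by
    have hgauss : Integrable fun t : ℝ => Real.exp (-(v / 2) * t ^ 2) :=
      integrable_exp_neg_mul_sq (by positivity)
    refine (hgauss.const_mul (μ.real Set.univ)).mono' (by fun_prop) (.of_forall fun t => ?_)
    rw [charFun_conv, norm_mul, norm_charFun_gaussianReal]
    gcongr
    exact norm_charFun_le t
  have hsplit : charFun ρ = charFun (ρ - τ) + charFun τ := by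
    rw [← charFun_add, Measure.sub_add_cancel_of_le hle]
  have hintsub : Integrable (charFun (ρ - τ)) := by
    simpa [hsplit] using hint.sub hintτ
  have hinv : inversionIntegral (charFun ρ) x
      = inversionIntegral (charFun (ρ - τ)) x + inversionIntegral (charFun τ) x := by
    simp only [inversionIntegral, hsplit, Pi.add_apply, mul_add]
    exact integral_add (integrable_cexp_neg_I_mul hintsub x) (integrable_cexp_neg_I_mul hintτ x)
  rw [hinv, Complex.add_re]
  exact add_pos_of_nonneg_of_pos (inversionIntegral_charFun_re_nonneg hintsub x)
    (inversionIntegral_charFun_conv_gaussianReal_re_pos hμ hv x)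

lemma IsCharFun.inversionIntegral_mul_cexp_re_pos {φ : ℝ → ℂ} (hφ : IsCharFun φ) {κ v : ℝ≥0}
    (hκ : κ ≠ 0) (hv : v ≠ 0)
    (hint : Integrable fun t => φ t * Complex.exp (κ * (charFun (gaussianReal 0 v) t - 1)))
    (x : ℝ) :
    0 < (inversionIntegral
      (fun t => φ t * Complex.exp (κ * (charFun (gaussianReal 0 v) t - 1))) x).re := by
  obtain ⟨μ, hμ, rfl⟩ := hφ
  set γ := gaussianReal 0 v
  set c : ℝ≥0 := Real.toNNReal (Real.exp (-κ)) with hc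
  have hc0 : c ≠ 0 := by positivity
  set ρ : Measure ℝ := μ ∗ (c • convExp (κ • γ))
  have hρ : charFun ρ = fun t => charFun μ t * Complex.exp (κ * (charFun γ t - 1)) := by
    ext t
    rw [charFun_conv, ENNReal.smul_def c, charFun_smul, charFun_convExp, ENNReal.smul_def κ,
      charFun_smul, ENNReal.coe_toReal, ENNReal.coe_toReal, hc,
      Real.coe_toNNReal _ (Real.exp_nonneg _), Complex.ofReal_exp, ← Complex.exp_add]
    congr 2
    push_cast
    ring
  have hle : ((c * κ) • μ) ∗ γ ≤ ρ := by
    calc ((c * κ) • μ) ∗ γ = μ ∗ (c • κ • γ) := by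
          rw [smul_smul, ENNReal.smul_def, ENNReal.smul_def, Measure.conv_smul_left,
            Measure.conv_smul_right]
      _ ≤ ρ := conv_le_conv_left μ (smul_mono_right c (le_convExp (κ • γ)))
  have hcμ : (c * κ) • μ ≠ 0 := smul_ne_zero (mul_ne_zero hc0 hκ) (IsProbabilityMeasure.ne_zero μ)
  rw [← hρ] at hint ⊢
  exact inversionIntegral_charFun_re_pos_of_conv_gaussianReal_le hcμ hv hle hint x

end FourierInversion

section LevyKhintchine

lemma integral_one_sub_mul_eq_sub {g g' g'' : ℝ → ℂ} (hg : ∀ s, HasDerivAt g (g' s) s)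
    (hg' : ∀ s, HasDerivAt g' (g'' s) s) (hg'' : Continuous g'') :
    ∫ s in (0 : ℝ)..1, (1 - s) * g'' s = g 1 - g 0 - g' 0 := by
  have hderiv (s : ℝ) : HasDerivAt (fun s : ℝ => (1 - s : ℂ) * g' s + g s)
      ((1 - s : ℂ) * g'' s) s := by
    have h := ((Complex.ofRealCLM.hasDerivAt (x := s)).const_sub 1).mul (hg' s)
    exact (h.add (hg s)).congr_deriv (by simp)
  rw [intervalIntegral.integral_eq_sub_of_hasDerivAt (fun s _ => hderiv s)
    (Continuous.intervalIntegrable (by fun_prop) _ _)]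
  push_cast
  ring

/-- The integrand `e^{itx} - 1 - itx` of the Lévy–Khintchine formula for centered laws of
finite variance. -/
noncomputable def levyIntegrand (t x : ℝ) : ℂ :=
  Complex.exp (t * x * Complex.I) - 1 - t * x * Complex.I

/-- The Lévy–Khintchine exponent of the centered law of finite variance with Lévy measure `ν` and
no Gaussian part. -/
noncomputable def levyExponent (ν : Measure ℝ) (t : ℝ) : ℂ :=
  ∫ x, levyIntegrand t x ∂ν

lemma continuous_levyIntegrand (t : ℝ) : Continuous (levyIntegrand t) := by
  unfold levyIntegrand
  fun_prop

lemma levyIntegrand_eq_integral (t x : ℝ) :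
    levyIntegrand t x = ∫ s in (0 : ℝ)..1,
      (1 - s : ℂ) * (-(t ^ 2) * (x ^ 2 * Complex.exp ((s * t : ℝ) * x * Complex.I))) := by
  have hderiv (s : ℝ) : HasDerivAt (fun s : ℝ => Complex.exp ((s * t : ℝ) * x * Complex.I))
      (t * x * Complex.I * Complex.exp ((s * t : ℝ) * x * Complex.I)) s := by
    have h : HasDerivAt (fun s : ℝ => ((s * t : ℝ) * x * Complex.I : ℂ)) (t * x * Complex.I) s := by
      simpa using (((hasDerivAt_id s).mul_const t).ofReal_comp.mul_const (x : ℂ)).mul_const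
        Complex.I
    exact h.cexp.congr_deriv (mul_comm _ _)
  rw [integral_one_sub_mul_eq_sub hderiv
    (fun s => ((hderiv s).const_mul (t * x * Complex.I)).congr_deriv ?_) (by fun_prop)]
  · simp [levyIntegrand]
  · linear_combination
      (t ^ 2 * x ^ 2 * Complex.exp ((s * t : ℝ) * x * Complex.I) : ℂ) * Complex.I_sq

lemma norm_levyIntegrand_le (t x : ℝ) : ‖levyIntegrand t x‖ ≤ t ^ 2 * x ^ 2 := by
  rw [levyIntegrand_eq_integral]
  refine (intervalIntegral.norm_integral_le_of_norm_le_const (C := t ^ 2 * x ^ 2)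
    fun s hs => ?_).trans (by simp)
  rw [Set.uIoc_of_le zero_le_one] at hs
  have hs' : ‖(1 - s : ℂ)‖ ≤ 1 := by
    rw [← Complex.ofReal_one, ← Complex.ofReal_sub, Complex.norm_real, Real.norm_eq_abs, abs_le]
    constructor <;> linarith [hs.1, hs.2]
  calc ‖(1 - s : ℂ) * (-(t ^ 2) * (x ^ 2 * Complex.exp ((s * t : ℝ) * x * Complex.I)))‖
      = ‖(1 - s : ℂ)‖ * (t ^ 2 * x ^ 2) := by simp [Complex.norm_exp]
    _ ≤ t ^ 2 * x ^ 2 := mul_le_of_le_one_left (by positivity) hs'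

variable {ν : Measure ℝ}

lemma integrable_levyIntegrand (hν : Integrable (fun x => x ^ 2) ν) (t : ℝ) :
    Integrable (levyIntegrand t) ν :=
  (hν.const_mul (t ^ 2)).mono' (continuous_levyIntegrand t).aestronglyMeasurable
    (.of_forall fun x => norm_levyIntegrand_le t x)

lemma levyExponent_add {τ : Measure ℝ} (hν : Integrable (fun x => x ^ 2) ν)
    (hτ : Integrable (fun x => x ^ 2) τ) (t : ℝ) :
    levyExponent (ν + τ) t = levyExponent ν t + levyExponent τ t :=
  integral_add_measure (integrable_levyIntegrand hν t) (integrable_levyIntegrand hτ t)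

lemma levyExponent_smul (c : ℝ≥0) (t : ℝ) : levyExponent (c • ν) t = c * levyExponent ν t := by
  rw [levyExponent, integral_smul_nnreal_measure]
  rfl

lemma levyExponent_map_neg (t : ℝ) :
    levyExponent (ν.map Neg.neg) t = levyExponent ν (-t) := by
  rw [levyExponent, integral_map (by fun_prop) (continuous_levyIntegrand t).aestronglyMeasurable]
  simp [levyExponent, levyIntegrand]

lemma levyExponent_eq_integral [SFinite ν] (hν : Integrable (fun x => x ^ 2) ν) (t : ℝ) :
    levyExponent ν t = ∫ s in (0 : ℝ)..1, (1 - s : ℂ)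
      * (-(t ^ 2) * ∫ x, x ^ 2 * Complex.exp ((s * t : ℝ) * x * Complex.I) ∂ν) := by
  have hprod : Integrable (Function.uncurry fun x s : ℝ => (1 - s : ℂ)
      * (-(t ^ 2) * (x ^ 2 * Complex.exp ((s * t : ℝ) * x * Complex.I))))
      (ν.prod (volume.restrict (Set.Ioc 0 1))) := by
    have hone : Integrable (fun s : ℝ => ‖(1 - s : ℂ)‖) (volume.restrict (Set.Ioc 0 1)) :=
      (Continuous.integrableOn_Icc (by fun_prop)).mono_set Set.Ioc_subset_Icc_self
    refine ((hν.const_mul (t ^ 2)).mul_prod hone).mono'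
      (Continuous.aestronglyMeasurable (by fun_prop)) (.of_forall fun p => ?_)
    simp [Function.uncurry, Complex.norm_exp, mul_comm]
  simp only [levyExponent, levyIntegrand_eq_integral, intervalIntegral.integral_of_le zero_le_one]
  rw [integral_integral_swap hprod]
  simp only [integral_const_mul]

lemma continuous_integral_sq_mul_cexp (hν : Integrable (fun x => x ^ 2) ν) :
    Continuous fun s : ℝ => ∫ x, x ^ 2 * Complex.exp (s * x * Complex.I) ∂ν := by
  refine continuous_of_dominated (bound := fun x => x ^ 2) (fun s => ?_) (fun s => ?_) hν ?_
  · exact Continuous.aestronglyMeasurable (by fun_prop)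
  · exact .of_forall fun x => by simp [Complex.norm_exp]
  · exact .of_forall fun x => by fun_prop

lemma levyExponent_eq_sub [SFinite ν] (hν : Integrable (fun x => x ^ 2) ν) {F F' : ℝ → ℂ}
    (hF : ∀ s, HasDerivAt F (F' s) s)
    (hF' : ∀ s : ℝ, HasDerivAt F' (-∫ x, x ^ 2 * Complex.exp (s * x * Complex.I) ∂ν) s) (t : ℝ) :
    levyExponent ν t = F t - F 0 - t * F' 0 := by
  have hscale (s : ℝ) : HasDerivAt (fun s => s * t) t s := by
    simpa using (hasDerivAt_id s).mul_const t
  have hFt (s : ℝ) : HasDerivAt (fun s => F (s * t)) (t * F' (s * t)) s :=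
    ((hF (s * t)).scomp s (hscale s)).congr_deriv (Complex.real_smul ..)
  have hF't (s : ℝ) : HasDerivAt (fun s => t * F' (s * t))
      (-(t ^ 2) * ∫ x, x ^ 2 * Complex.exp ((s * t : ℝ) * x * Complex.I) ∂ν) s := by
    refine (((hF' (s * t)).scomp s (hscale s)).const_mul (t : ℂ)).congr_deriv ?_
    rw [Complex.real_smul]
    ring
  have hcont := (continuous_integral_sq_mul_cexp hν).comp (continuous_mul_const t)
  rw [levyExponent_eq_integral hν, integral_one_sub_mul_eq_sub hFt hF't
    (continuous_const.mul hcont), one_mul, zero_mul]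

end LevyKhintchine

section LevyCharFun

variable {ν : Measure ℝ}

lemma levyExponent_eq_charFun_sub [IsFiniteMeasure ν] (hν : Integrable (fun x => x ^ 2) ν) (t : ℝ) :
    levyExponent ν t = charFun ν t - charFun ν 0 - t * (∫ x, x ∂ν) * Complex.I := by
  have hexp : Integrable (fun x : ℝ => Complex.exp (t * x * Complex.I)) ν :=
    .of_bound (by fun_prop) 1 <| .of_forall fun x => by simp [Complex.norm_exp]
  have hid : Integrable (fun x : ℝ => x) ν :=
    ((memLp_two_iff_integrable_sq aestronglyMeasurable_id).2 hν).integrable one_le_two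
  have hsub : Integrable (fun x : ℝ => Complex.exp (t * x * Complex.I) - 1) ν :=
    hexp.sub (integrable_const 1)
  have hlin : Integrable (fun x : ℝ => (t * x * Complex.I : ℂ)) ν :=
    (hid.ofReal.const_mul _).mul_const _
  simp only [levyExponent, levyIntegrand]
  rw [integral_sub hsub hlin, integral_sub hexp (integrable_const _), integral_mul_const,
    integral_const_mul, integral_complex_ofReal, charFun_apply_real, charFun_zero]
  simp

lemma isCharFun_cexp_levyExponent_of_isFiniteMeasure [IsFiniteMeasure ν]
    (hν : Integrable (fun x => x ^ 2) ν) :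
    IsCharFun fun t => Complex.exp (levyExponent ν t) := by
  convert (isCharFun_cexp_charFun_sub ν).mul
    (isCharFun_cexp_inner_mul_I (-∫ x, x ∂ν)) using 2 with t
  rw [Pi.mul_apply, ← Complex.exp_add, levyExponent_eq_charFun_sub hν]
  congr 1
  simp only [RCLike.inner_apply, conj_trivial]
  push_cast
  ring

lemma norm_levyExponent_le (hν : Integrable (fun x => x ^ 2) ν) (t : ℝ) :
    ‖levyExponent ν t‖ ≤ t ^ 2 * ∫ x, x ^ 2 ∂ν := by
  rw [← integral_const_mul]
  exact norm_integral_le_of_norm_le (hν.const_mul _) (.of_forall (norm_levyIntegrand_le t))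

lemma levyExponent_zero : levyExponent ν 0 = 0 := by
  simp [levyExponent, levyIntegrand]

lemma continuousAt_levyExponent_zero (hν : Integrable (fun x => x ^ 2) ν) :
    ContinuousAt (levyExponent ν) 0 := by
  rw [ContinuousAt, levyExponent_zero]
  refine squeeze_zero_norm (norm_levyExponent_le hν) ?_
  simpa using ((continuous_id.pow 2).mul_const (∫ x, x ^ 2 ∂ν)).tendsto (0 : ℝ)

lemma isFiniteMeasure_restrict_le_abs (hν : Integrable (fun x => x ^ 2) ν) {r : ℝ} (hr : 0 < r) :
    IsFiniteMeasure (ν.restrict {x | r ≤ |x|}) := by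
  refine ⟨?_⟩
  rw [Measure.restrict_apply_univ]
  refine (measure_mono fun x hx => ?_).trans_lt (hν.measure_norm_ge_lt_top (pow_pos hr 2))
  rw [Set.mem_ofPred_eq, Real.norm_eq_abs, abs_sq, ← sq_abs x]
  exact pow_le_pow_left₀ hr.le hx 2

-- The truncations of `ν` away from `0` are finite and give compound Poisson laws.
lemma isCharFun_cexp_levyExponent (hν : Integrable (fun x => x ^ 2) ν) :
    IsCharFun fun t => Complex.exp (levyExponent ν t) := by
  let S : ℕ → Set ℝ := fun n => {x | 1 / ((n : ℝ) + 1) ≤ |x|}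
  have hS (n : ℕ) : MeasurableSet (S n) := measurableSet_le measurable_const (by fun_prop)
  have hfin (n : ℕ) : IsFiniteMeasure (ν.restrict (S n)) :=
    isFiniteMeasure_restrict_le_abs hν (by positivity)
  have hSmono : Monotone S := fun m n hmn x (hx : 1 / ((m : ℝ) + 1) ≤ |x|) =>
    show 1 / ((n : ℝ) + 1) ≤ |x| from (Nat.one_div_le_one_div hmn).trans hx
  have hlim (t : ℝ) : Tendsto (fun n => levyExponent (ν.restrict (S n)) t) atTop
      (𝓝 (levyExponent ν t)) := by
    have h := tendsto_setIntegral_of_monotone hS hSmono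
      (integrable_levyIntegrand hν t).integrableOn
    rwa [setIntegral_eq_integral_of_forall_compl_eq_zero fun x hx => ?_] at h
    have hx0 : x = 0 := by
      by_contra hx0
      obtain ⟨n, hn⟩ := exists_nat_one_div_lt (abs_pos.2 hx0)
      exact hx (Set.mem_iUnion.2 ⟨n, hn.le⟩)
    simp [hx0, levyIntegrand]
  exact .of_tendsto (fun n => isCharFun_cexp_levyExponent_of_isFiniteMeasure hν.restrict)
    (continuousAt_levyExponent_zero hν).cexp fun t => (hlim t).cexp

lemma isCharFun_cexp_levyExponent_sub {τ : Measure ℝ} [IsFiniteMeasure τ] (hτν : τ ≤ ν)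
    (hν : Integrable (fun x => x ^ 2) ν) :
    IsCharFun fun t => Complex.exp (levyExponent ν t - levyExponent τ t) := by
  have hsub : ν - τ + τ = ν := Measure.sub_add_cancel_of_le hτν
  have hνsub : Integrable (fun x => x ^ 2) (ν - τ) := hν.mono_measure Measure.sub_le
  convert isCharFun_cexp_levyExponent hνsub using 3 with t
  rw [← hsub, levyExponent_add hνsub (hν.mono_measure hτν), hsub, add_sub_cancel_right]

lemma levyExponent_gaussianReal (v : ℝ≥0) (t : ℝ) :
    levyExponent (gaussianReal 0 v) t = charFun (gaussianReal 0 v) t - 1 := by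
  have hsq : Integrable (fun x => x ^ 2) (gaussianReal 0 v) :=
    (memLp_two_iff_integrable_sq aestronglyMeasurable_id).1 (memLp_id_gaussianReal 2)
  rw [levyExponent_eq_charFun_sub hsq, integral_id_gaussianReal, charFun_zero]
  simp

end LevyCharFun

section GammaTypeMeasure

/-- The measure `x ^ (a - 1) * exp (-r * x) dx` on the positive half-line. For `a, r > 0` it is an
unnormalized Gamma law; for `a = -α` it is the Lévy measure of an exponentially tempered one-sided
`α`-stable law. -/
noncomputable def gammaTypeMeasure (a r : ℝ) : Measure ℝ :=
  (volume.restrict (Set.Ioi 0)).withDensity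
    fun x => ENNReal.ofReal (x ^ (a - 1) * Real.exp (-(r * x)))

instance (a r : ℝ) : SFinite (gammaTypeMeasure a r) :=
  inferInstanceAs (SFinite (Measure.withDensity _ _))

variable {E : Type*} [NormedAddCommGroup E] [NormedSpace ℝ E] {a r : ℝ}

lemma integral_gammaTypeMeasure (g : ℝ → E) :
    ∫ x, g x ∂gammaTypeMeasure a r
      = ∫ x in Set.Ioi (0 : ℝ), (x ^ (a - 1) * Real.exp (-(r * x))) • g x := by
  rw [gammaTypeMeasure, integral_withDensity_eq_integral_toReal_smul (by fun_prop)
    (.of_forall fun x => ENNReal.ofReal_lt_top)]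
  refine setIntegral_congr_fun measurableSet_Ioi fun x (hx : 0 < x) => ?_
  rw [ENNReal.toReal_ofReal (by positivity)]

lemma integrable_gammaTypeMeasure_iff {g : ℝ → E} :
    Integrable g (gammaTypeMeasure a r)
      ↔ IntegrableOn (fun x => (x ^ (a - 1) * Real.exp (-(r * x))) • g x) (Set.Ioi 0) := by
  rw [gammaTypeMeasure, integrable_withDensity_iff_integrable_smul' (by fun_prop)
    (.of_forall fun x => ENNReal.ofReal_lt_top)]
  refine integrableOn_congr_fun (fun x (hx : 0 < x) => ?_) measurableSet_Ioi
  rw [ENNReal.toReal_ofReal (by positivity)]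

lemma integrable_exp_mul_gammaTypeMeasure (ha : 0 < a) {t : ℝ} (ht : t < r) :
    Integrable (fun x => Real.exp (t * x)) (gammaTypeMeasure a r) := by
  rw [integrable_gammaTypeMeasure_iff]
  have h := integrableOn_rpow_mul_exp_neg_mul_rpow (s := a - 1) (p := 1) (b := r - t)
    (by linarith) one_pos (by linarith)
  refine h.congr_fun (fun x _ => ?_) measurableSet_Ioi
  simp only [Real.rpow_one, smul_eq_mul, mul_assoc, ← Real.exp_add]
  ring_nf

lemma mgf_gammaTypeMeasure (ha : 0 < a) {t : ℝ} (ht : t < r) :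
    mgf id (gammaTypeMeasure a r) t = Real.Gamma a * (r - t) ^ (-a) := by
  have h := Real.integral_rpow_mul_exp_neg_mul_Ioi ha (sub_pos.2 ht)
  rw [one_div, Real.inv_rpow (sub_pos.2 ht).le, ← Real.rpow_neg (sub_pos.2 ht).le, mul_comm] at h
  rw [mgf, integral_gammaTypeMeasure, ← h]
  refine setIntegral_congr_fun measurableSet_Ioi fun x _ => ?_
  simp only [id, smul_eq_mul, mul_assoc, ← Real.exp_add]
  ring_nf

-- Both sides are analytic on the half-plane and agree on its real points.
lemma complexMGF_gammaTypeMeasure (ha : 0 < a) {z : ℂ} (hz : z.re < r) :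
    complexMGF id (gammaTypeMeasure a r) z = Real.Gamma a * (r - z) ^ (-a : ℂ) := by
  have hinterior : Set.Iio r ⊆ interior (integrableExpSet id (gammaTypeMeasure a r)) :=
    isOpen_Iio.subset_interior_iff.2 fun t ht => integrable_exp_mul_gammaTypeMeasure ha ht
  have hmgf : AnalyticOnNhd ℂ (complexMGF id (gammaTypeMeasure a r)) {z | z.re < r} :=
    analyticOnNhd_complexMGF.mono fun z hz => hinterior hz
  have hpow : AnalyticOnNhd ℂ (fun z : ℂ => Real.Gamma a * (r - z) ^ (-a : ℂ)) {z | z.re < r} := by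
    refine fun z (hz : z.re < r) => analyticAt_const.mul ((by fun_prop : AnalyticAt ℂ
      (fun z : ℂ => r - z) z).cpow analyticAt_const (Or.inl ?_))
    simpa using hz
  have hfreq : ∃ᶠ w in 𝓝[≠] ((r - 1 : ℝ) : ℂ), complexMGF id (gammaTypeMeasure a r) w
      = Real.Gamma a * (r - w) ^ (-a : ℂ) := by
    have hofReal : Tendsto ((↑) : ℝ → ℂ) (𝓝[≠] (r - 1)) (𝓝[≠] ((r - 1 : ℝ) : ℂ)) :=
      Complex.continuous_ofReal.continuousWithinAt.tendsto_nhdsWithin fun _ h =>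
        Complex.ofReal_injective.ne h
    refine hofReal.frequently (Eventually.frequently ?_)
    filter_upwards [nhdsWithin_le_nhds (gt_mem_nhds (sub_one_lt r))] with t ht
    rw [complexMGF_ofReal, mgf_gammaTypeMeasure ha ht]
    push_cast [Complex.ofReal_cpow (sub_pos.2 ht).le]
    rfl
  exact hmgf.eqOn_of_preconnected_of_frequently_eq hpow
    (convex_halfSpace_re_lt r).isPreconnected (by simp) hfreq hz

lemma integrable_sq_gammaTypeMeasure (ha : 0 < a + 2) (hr : 0 < r) :
    Integrable (fun x => x ^ 2) (gammaTypeMeasure a r) := by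
  rw [integrable_gammaTypeMeasure_iff]
  refine (integrableOn_rpow_mul_exp_neg_mul_rpow (s := a - 1 + (2 : ℕ)) (by push_cast; linarith)
    one_pos hr).congr_fun (fun x (hx : 0 < x) => ?_) measurableSet_Ioi
  simp only [Real.rpow_one, smul_eq_mul, Real.rpow_add_natCast hx.ne']
  ring_nf

lemma integral_sq_mul_cexp_gammaTypeMeasure (ha : 0 < a + 2) (hr : 0 < r) (s : ℝ) :
    ∫ x, x ^ 2 * Complex.exp (s * x * Complex.I) ∂gammaTypeMeasure a r
      = Real.Gamma (a + 2) * (r - s * Complex.I) ^ (-(a + 2) : ℂ) := by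
  calc ∫ x, x ^ 2 * Complex.exp (s * x * Complex.I) ∂gammaTypeMeasure a r
      = complexMGF id (gammaTypeMeasure (a + 2) r) (s * Complex.I) := by
        rw [complexMGF, integral_gammaTypeMeasure, integral_gammaTypeMeasure]
        refine setIntegral_congr_fun measurableSet_Ioi fun x (hx : 0 < x) => ?_
        have hpow : x ^ (a + 2 - 1) = x ^ (a - 1) * x ^ 2 := by
          rw [← Real.rpow_add_natCast hx.ne']
          ring_nf
        simp only [hpow, id, Complex.real_smul]
        push_cast
        ring_nf
    _ = Real.Gamma (a + 2) * (r - s * Complex.I) ^ (-(a + 2) : ℂ) := by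
        rw [complexMGF_gammaTypeMeasure ha (by simpa using hr)]
        push_cast
        rfl

/-- The two-sided analogue of `gammaTypeMeasure`, with weight `p` on the positive and `q` on the
negative half-line; for `a = -α` it is the Lévy measure of a tempered `α`-stable law. -/
noncomputable def bilateralGammaTypeMeasure (a r : ℝ) (p q : ℝ≥0) : Measure ℝ :=
  p • gammaTypeMeasure a r + q • (gammaTypeMeasure a r).map Neg.neg

lemma integrable_sq_bilateralGammaTypeMeasure (ha : 0 < a + 2) (hr : 0 < r) (p q : ℝ≥0) :
    Integrable (fun x => x ^ 2) (bilateralGammaTypeMeasure a r p q) := by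
  have hpos := integrable_sq_gammaTypeMeasure ha hr
  refine (hpos.smul_measure_nnreal).add_measure (Integrable.smul_measure_nnreal ?_)
  exact (integrable_map_measure (by fun_prop) (by fun_prop)).2 (by simpa [Function.comp_def])

end GammaTypeMeasure

section LaplaceExponent

/-- A second primitive of `z ^ (α - 2)` on the right half-plane, vanishing at `0`. Up to a positive
factor and a drift, it is the Laplace exponent of a one-sided `α`-stable law. -/
noncomputable def stableLaplaceExponent (α : ℝ) (z : ℂ) : ℂ :=
  if α = 1 then z * Complex.log z else z ^ (α : ℂ) / (α * (α - 1))

/-- The derivative of `stableLaplaceExponent` on the right half-plane. -/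
noncomputable def stableLaplaceExponentDeriv (α : ℝ) (z : ℂ) : ℂ :=
  if α = 1 then Complex.log z + 1 else z ^ (α - 1 : ℂ) / (α - 1)

variable {α : ℝ} {z : ℂ}

lemma stableLaplaceExponent_one : stableLaplaceExponent 1 z = z * Complex.log z := if_pos rfl

lemma stableLaplaceExponent_of_ne_one (hα : α ≠ 1) :
    stableLaplaceExponent α z = z ^ (α : ℂ) / (α * (α - 1)) := if_neg hα

lemma stableLaplaceExponent_zero (hα : α ≠ 0) : stableLaplaceExponent α 0 = 0 := by
  simp [stableLaplaceExponent, hα]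

lemma hasDerivAt_stableLaplaceExponent (hα : α ≠ 0) (hz : 0 < z.re) :
    HasDerivAt (stableLaplaceExponent α) (stableLaplaceExponentDeriv α z) z := by
  have hslit : z ∈ Complex.slitPlane := Or.inl hz
  unfold stableLaplaceExponent stableLaplaceExponentDeriv
  split_ifs with h1
  · refine ((hasDerivAt_id z).fun_mul (Complex.hasDerivAt_log hslit)).congr_deriv ?_
    rw [one_mul, id, mul_inv_cancel₀ (Complex.slitPlane_ne_zero hslit)]
  · refine ((Complex.hasStrictDerivAt_cpow_const hslit).hasDerivAt.div_const _).congr_deriv ?_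
    rw [mul_div_mul_left _ _ (Complex.ofReal_ne_zero.2 hα)]

lemma hasDerivAt_stableLaplaceExponentDeriv (hz : 0 < z.re) :
    HasDerivAt (stableLaplaceExponentDeriv α) (z ^ (α - 2 : ℂ)) z := by
  have hslit : z ∈ Complex.slitPlane := Or.inl hz
  unfold stableLaplaceExponentDeriv
  split_ifs with h1
  · refine ((Complex.hasDerivAt_log hslit).add_const 1).congr_deriv ?_
    rw [h1, ← Complex.cpow_neg_one]
    norm_num
  · have hα : (α : ℂ) - 1 ≠ 0 := sub_ne_zero.2 (by exact_mod_cast h1)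
    refine ((Complex.hasStrictDerivAt_cpow_const hslit).hasDerivAt.div_const _).congr_deriv ?_
    rw [mul_div_cancel_left₀ _ hα]
    ring_nf

lemma ofReal_re_stableLaplaceExponentDeriv {x : ℝ} (hx : 0 < x) :
    ((stableLaplaceExponentDeriv α x).re : ℂ) = stableLaplaceExponentDeriv α x := by
  refine Complex.ext (Complex.ofReal_re _) ?_
  unfold stableLaplaceExponentDeriv
  split_ifs with h1
  · simp [← Complex.ofReal_log hx.le]
  · rw [Complex.ofReal_im]
    norm_cast
    rw [← Complex.ofReal_cpow hx.le, ← Complex.ofReal_div, Complex.ofReal_im]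

lemma continuousAt_mul_log_zero : ContinuousAt (fun z : ℂ => z * Complex.log z) 0 := by
  have hbound (z : ℂ) : ‖z * Complex.log z‖ ≤ |‖z‖ * Real.log ‖z‖| + ‖z‖ * π := by
    rw [norm_mul, abs_mul, abs_norm, ← mul_add]
    gcongr
    calc ‖Complex.log z‖ ≤ |(Complex.log z).re| + |(Complex.log z).im| :=
          Complex.norm_le_abs_re_add_abs_im _
      _ ≤ |Real.log ‖z‖| + π := by
          rw [Complex.log_re, Complex.log_im]
          gcongr
          exact Complex.abs_arg_le_pi z
  have hcont : Continuous fun z : ℂ => |‖z‖ * Real.log ‖z‖| + ‖z‖ * π :=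
    (Real.continuous_mul_log.comp continuous_norm).abs.add (by fun_prop)
  rw [ContinuousAt, zero_mul]
  exact squeeze_zero_norm hbound (by simpa using hcont.tendsto 0)

lemma continuousAt_stableLaplaceExponent (hα : 0 < α) (hz : 0 ≤ z.re) :
    ContinuousAt (stableLaplaceExponent α) z := by
  unfold stableLaplaceExponent
  split_ifs with h1
  · rcases eq_or_ne z 0 with rfl | hz0
    · exact continuousAt_mul_log_zero
    · have hslit : z ∈ Complex.slitPlane := by
        by_contra hnot
        rw [Complex.mem_slitPlane_iff, not_or, not_lt, not_not] at hnot
        exact hz0 (Complex.ext (hnot.1.antisymm hz) hnot.2)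
      exact continuousAt_id.mul (continuousAt_clog hslit)
  · exact (Complex.continuousAt_cpow_const_of_re_pos (Or.inl hz) (by simpa using hα)).div_const _

lemma levyExponent_gammaTypeMeasure (hα0 : α ≠ 0) (hα2 : α < 2) {ε : ℝ} (hε : 0 < ε) (t : ℝ) :
    levyExponent (gammaTypeMeasure (-α) ε) t = Real.Gamma (2 - α)
      * (stableLaplaceExponent α (ε - t * Complex.I) - stableLaplaceExponent α ε
        + t * stableLaplaceExponentDeriv α ε * Complex.I) := by
  have hline (s : ℝ) : HasDerivAt (fun s : ℝ => (ε : ℂ) - s * Complex.I) (-Complex.I) s := by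
    simpa using ((hasDerivAt_id s).ofReal_comp.mul_const Complex.I).const_sub (ε : ℂ)
  have hre (s : ℝ) : 0 < ((ε : ℂ) - s * Complex.I).re := by simpa using hε
  rw [levyExponent_eq_sub (integrable_sq_gammaTypeMeasure (by linarith) hε)
    (F := fun s => Real.Gamma (2 - α) * stableLaplaceExponent α (ε - s * Complex.I))
    (F' := fun s => Real.Gamma (2 - α)
      * (stableLaplaceExponentDeriv α (ε - s * Complex.I) * -Complex.I))]
  · push_cast
    ring_nf
  · exact fun s => ((hasDerivAt_stableLaplaceExponent hα0 (hre s)).comp s (hline s)).const_mul _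
  · intro s
    refine ((((hasDerivAt_stableLaplaceExponentDeriv (hre s)).comp s (hline s)).mul_const
      (-Complex.I)).const_mul _).congr_deriv ?_
    rw [integral_sq_mul_cexp_gammaTypeMeasure (by linarith) hε]
    push_cast
    ring_nf
    rw [Complex.I_sq]
    ring

end LaplaceExponent

section GaussianComparison

lemma restrict_Ioi_zero_add_map_neg (μ : Measure ℝ) [NullSingletonClass μ]
    (hμ : μ.map Neg.neg = μ) :
    μ.restrict (Set.Ioi 0) + (μ.restrict (Set.Ioi 0)).map Neg.neg = μ := by
  have hreflect : (μ.restrict (Set.Ioi 0)).map Neg.neg = μ.restrict (Set.Ioi 0)ᶜ := by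
    conv_rhs => rw [← hμ]
    rw [Measure.restrict_map measurable_neg measurableSet_Ioi.compl, Set.compl_Ioi]
    congr 1
    exact Measure.restrict_congr_set (by simpa using Ioi_ae_eq_Ici)
  rw [hreflect, Measure.restrict_add_restrict_compl measurableSet_Ioi]

-- The constant comes from `4 * x - x ^ 2 / 2 ≤ 8`.
lemma exp_neg_mul_gaussianPDFReal_le {a r x : ℝ} (ha : -2 ≤ a) (ha1 : a ≤ 1) (hr : r ≤ 1)
    (hx : 0 < x) :
    Real.exp (-8) * gaussianPDFReal 0 1 x ≤ x ^ (a - 1) * Real.exp (-(r * x)) := by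
  have hpdf : gaussianPDFReal 0 1 x ≤ Real.exp (-(x ^ 2 / 2)) := by
    have hsqrt : (√(2 * π))⁻¹ ≤ 1 :=
      inv_le_one_of_one_le₀ (Real.one_le_sqrt.2 (by linarith [Real.pi_gt_three]))
    simpa [gaussianPDFReal, neg_div] using
      mul_le_mul_of_nonneg_right hsqrt (Real.exp_pos (-(x ^ 2 / 2))).le
  have hrpow : Real.exp (x * (a - 1)) ≤ x ^ (a - 1) := by
    rw [Real.exp_mul]
    exact Real.rpow_le_rpow_of_nonpos hx (by linarith [Real.add_one_le_exp x]) (by linarith)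
  calc Real.exp (-8) * gaussianPDFReal 0 1 x
      ≤ Real.exp (-8) * Real.exp (-(x ^ 2 / 2)) := by gcongr
    _ = Real.exp (-8 - x ^ 2 / 2) := by rw [← Real.exp_add, sub_eq_add_neg]
    _ ≤ Real.exp (x * (a - 1) - r * x) := by
        refine Real.exp_le_exp.2 ?_
        nlinarith [sq_nonneg (x - 4), mul_nonneg hx.le (by linarith : 0 ≤ a + 3 - r)]
    _ = Real.exp (x * (a - 1)) * Real.exp (-(r * x)) := by rw [← Real.exp_add, sub_eq_add_neg]
    _ ≤ x ^ (a - 1) * Real.exp (-(r * x)) := by gcongr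

lemma smul_gaussianReal_restrict_le_gammaTypeMeasure {a r : ℝ} (ha : -2 ≤ a) (ha1 : a ≤ 1)
    (hr : r ≤ 1) :
    (Real.exp (-8)).toNNReal • (gaussianReal 0 1).restrict (Set.Ioi 0)
      ≤ gammaTypeMeasure a r := by
  rw [gaussianReal_of_var_ne_zero 0 one_ne_zero, restrict_withDensity measurableSet_Ioi,
    ENNReal.smul_def, ← withDensity_smul _ (measurable_gaussianPDF 0 1), gammaTypeMeasure]
  refine withDensity_mono ((ae_restrict_iff' measurableSet_Ioi).2 (.of_forall fun x hx => ?_))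
  rw [Pi.smul_apply, gaussianPDF, smul_eq_mul, ← ENNReal.ofReal,
    ← ENNReal.ofReal_mul (Real.exp_pos _).le]
  exact ENNReal.ofReal_le_ofReal (exp_neg_mul_gaussianPDFReal_le ha ha1 hr hx)

lemma smul_gaussianReal_le_bilateralGammaTypeMeasure {a r : ℝ} (ha : -2 ≤ a) (ha1 : a ≤ 1)
    (hr : r ≤ 1) (p q : ℝ≥0) :
    (min p q * (Real.exp (-8)).toNNReal) • gaussianReal 0 1
      ≤ bilateralGammaTypeMeasure a r p q := by
  have hhalf := smul_gaussianReal_restrict_le_gammaTypeMeasure ha ha1 hr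
  have : NullSingletonClass (gaussianReal 0 1) := nullSingletonClass_gaussianReal one_ne_zero
  have hsymm := restrict_Ioi_zero_add_map_neg (gaussianReal 0 1)
    (gaussianReal_map_neg.trans (by rw [neg_zero]))
  rw [← hsymm, smul_add, mul_smul, mul_smul, ← Measure.map_smul,
    bilateralGammaTypeMeasure]
  gcongr
  · exact min_le_left p q
  · exact min_le_right p q
  · exact measurable_neg

end GaussianComparison

section StableCumulant

/-- The cumulant function of the two-sided `α`-stable law whose positive and negative jumps have
the (suitably normalized) intensities `p` and `q`, with drift `d`. -/
noncomputable def stableCumulant (α p q d t : ℝ) : ℂ :=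
  p * stableLaplaceExponent α (-(t * Complex.I)) + q * stableLaplaceExponent α (t * Complex.I)
    + d * t * Complex.I

variable {α : ℝ}

lemma continuous_stableCumulant (hα : 0 < α) (p q d : ℝ) :
    Continuous (stableCumulant α p q d) := by
  have hcomp (s : ℝ) :
      Continuous fun t : ℝ => stableLaplaceExponent α (s * (t * Complex.I)) :=
    continuous_iff_continuousAt.2 fun t => ContinuousAt.comp
      (continuousAt_stableLaplaceExponent hα (by simp)) (by fun_prop)
  have hneg : Continuous fun t : ℝ => stableLaplaceExponent α (-(t * Complex.I)) := by
    simpa using hcomp (-1)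
  have hpos : Continuous fun t : ℝ => stableLaplaceExponent α (t * Complex.I) := by
    simpa using hcomp 1
  unfold stableCumulant
  fun_prop

lemma levyExponent_bilateralGammaTypeMeasure_add_drift (hα0 : α ≠ 0) (hα2 : α < 2) {ε : ℝ}
    (hε : 0 < ε) (p q : ℝ≥0) (d t : ℝ) :
    levyExponent (bilateralGammaTypeMeasure (-α) ε p q) t
        + (d - Real.Gamma (2 - α) * (p - q) * (stableLaplaceExponentDeriv α ε).re : ℝ) * t
          * Complex.I
      = Real.Gamma (2 - α)
        * (p * (stableLaplaceExponent α (ε - t * Complex.I) - stableLaplaceExponent α ε)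
          + q * (stableLaplaceExponent α (ε + t * Complex.I) - stableLaplaceExponent α ε))
        + d * t * Complex.I := by
  have hsq := integrable_sq_bilateralGammaTypeMeasure (a := -α) (r := ε) (by linarith) hε
  have hpos : Integrable (fun x => x ^ 2) (p • gammaTypeMeasure (-α) ε) := by
    simpa [bilateralGammaTypeMeasure] using hsq p 0
  have hneg : Integrable (fun x => x ^ 2) (q • (gammaTypeMeasure (-α) ε).map Neg.neg) := by
    simpa [bilateralGammaTypeMeasure] using hsq 0 q
  rw [bilateralGammaTypeMeasure, levyExponent_add hpos hneg, levyExponent_smul, levyExponent_smul,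
    levyExponent_map_neg, levyExponent_gammaTypeMeasure hα0 hα2 hε,
    levyExponent_gammaTypeMeasure hα0 hα2 hε]
  push_cast
  rw [ofReal_re_stableLaplaceExponentDeriv hε, neg_mul, sub_neg_eq_add]
  ring

lemma tendsto_levyExponent_bilateralGammaTypeMeasure_add_drift (hα0 : 0 < α) (hα2 : α < 2)
    (p q : ℝ≥0) (d t : ℝ) :
    Tendsto (fun ε : ℝ => levyExponent (bilateralGammaTypeMeasure (-α) ε p q) t
        + (d - Real.Gamma (2 - α) * (p - q) * (stableLaplaceExponentDeriv α ε).re : ℝ) * t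
          * Complex.I) (𝓝[>] 0)
      (𝓝 (stableCumulant α (Real.Gamma (2 - α) * p) (Real.Gamma (2 - α) * q) d t)) := by
  have hshift (w : ℂ) (hw : 0 ≤ w.re) : Tendsto (fun ε : ℝ => stableLaplaceExponent α (ε + w))
      (𝓝[>] 0) (𝓝 (stableLaplaceExponent α w)) := by
    refine (continuousAt_stableLaplaceExponent hα0 hw).tendsto.comp ?_
    exact ((by fun_prop : Continuous fun ε : ℝ => (ε : ℂ) + w).tendsto' 0 w (by simp)).mono_left
      nhdsWithin_le_nhds
  have hzero := hshift 0 le_rfl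
  have hlim := (((((hshift (-(t * Complex.I)) (by simp)).sub hzero).const_mul (p : ℂ)).add
    (((hshift (t * Complex.I) (by simp)).sub hzero).const_mul (q : ℂ))).const_mul
      (Real.Gamma (2 - α) : ℂ)).add_const (d * t * Complex.I)
  refine (hlim.congr' ?_).trans_eq ?_
  · filter_upwards [self_mem_nhdsWithin] with ε hε
    rw [levyExponent_bilateralGammaTypeMeasure_add_drift hα0.ne' hα2 hε, add_zero,
      ← sub_eq_add_neg]
  · rw [stableLaplaceExponent_zero hα0.ne', stableCumulant]
    push_cast
    ring_nf

-- For every `ε ≤ 1` the Lévy measure of the tempered law dominates one and the same multiple of the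
-- standard Gaussian law, which can therefore be split off before letting `ε → 0`.
lemma isCharFun_cexp_stableCumulant_sub (hα0 : 0 < α) (hα2 : α < 2) (p q : ℝ≥0) (d : ℝ) :
    IsCharFun fun t => Complex.exp
      (stableCumulant α (Real.Gamma (2 - α) * p) (Real.Gamma (2 - α) * q) d t
        - (min p q * (Real.exp (-8)).toNNReal : ℝ≥0) * (charFun (gaussianReal 0 1) t - 1)) := by
  set κ : ℝ≥0 := min p q * (Real.exp (-8)).toNNReal
  let ε : ℕ → ℝ := fun n => 1 / (n + 1)
  have hε (n : ℕ) : 0 < ε n := by positivity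
  let b : ℕ → ℝ := fun n =>
    d - Real.Gamma (2 - α) * (p - q) * (stableLaplaceExponentDeriv α (ε n)).re
  have hεlim : Tendsto ε atTop (𝓝[>] 0) :=
    tendsto_nhdsWithin_iff.2 ⟨tendsto_one_div_add_atTop_nhds_zero_nat, .of_forall hε⟩
  have hchar (n : ℕ) : IsCharFun fun t : ℝ => Complex.exp
      (levyExponent (bilateralGammaTypeMeasure (-α) (ε n) p q) t + b n * t * Complex.I
        - κ * (charFun (gaussianReal 0 1) t - 1)) := by
    have hle : κ • gaussianReal 0 1 ≤ bilateralGammaTypeMeasure (-α) (ε n) p q :=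
      smul_gaussianReal_le_bilateralGammaTypeMeasure (by linarith) (by linarith)
        (div_le_one_of_le₀ (by simp) (by positivity)) p q
    convert (isCharFun_cexp_levyExponent_sub hle
      (integrable_sq_bilateralGammaTypeMeasure (by linarith) (hε n) p q)).mul
      (isCharFun_cexp_inner_mul_I (b n)) using 2 with t
    rw [Pi.mul_apply, ← Complex.exp_add, levyExponent_smul, levyExponent_gaussianReal]
    congr 1
    simp only [RCLike.inner_apply, conj_trivial]
    push_cast
    ring
  refine IsCharFun.of_tendsto hchar ?_ fun t => ?_
  · exact (((continuous_stableCumulant hα0 _ _ d).sub (by fun_prop)).cexp).continuousAt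
  · exact (((tendsto_levyExponent_bilateralGammaTypeMeasure_add_drift hα0 hα2 p q d t).comp
      hεlim).sub_const _).cexp

lemma exists_isCharFun_cexp_stableCumulant_sub (hα0 : 0 < α) (hα2 : α < 2) {p q : ℝ} (hp : 0 < p)
    (hq : 0 < q) (d : ℝ) :
    ∃ κ : ℝ≥0, κ ≠ 0 ∧ IsCharFun fun t => Complex.exp
      (stableCumulant α p q d t - κ * (charFun (gaussianReal 0 1) t - 1)) := by
  have hΓ : 0 < Real.Gamma (2 - α) := Real.Gamma_pos_of_pos (by linarith)
  have hscale {c : ℝ} (hc : 0 < c) :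
      Real.Gamma (2 - α) * (c / Real.Gamma (2 - α)).toNNReal = c := by
    rw [Real.coe_toNNReal _ (by positivity), mul_div_cancel₀ _ hΓ.ne']
  have hchar := isCharFun_cexp_stableCumulant_sub hα0 hα2 (p / Real.Gamma (2 - α)).toNNReal
    (q / Real.Gamma (2 - α)).toNNReal d
  rw [hscale hp, hscale hq] at hchar
  refine ⟨_, ne_of_gt ?_, hchar⟩
  positivity

end StableCumulant

section StableParameters

lemma sign_mul_self_eq_abs (t : ℝ) : Real.sign t * t = |t| := by
  rcases lt_trichotomy t 0 with ht | rfl | ht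
  · simp [Real.sign_of_neg ht, abs_of_neg ht]
  · simp
  · simp [Real.sign_of_pos ht, abs_of_pos ht]

lemma clog_ofReal_mul_I {t : ℝ} (ht : t ≠ 0) :
    Complex.log (t * Complex.I) = Real.log |t| + Real.sign t * (π / 2) * Complex.I := by
  rcases lt_or_gt_of_ne ht with ht | ht
  · have hI : (t : ℂ) * Complex.I = (|t| : ℝ) * -Complex.I := by rw [abs_of_neg ht]; simp
    rw [hI, Complex.log_ofReal_mul (abs_pos.2 ht.ne) (neg_ne_zero.2 Complex.I_ne_zero),
      Complex.log_neg_I, Real.sign_of_neg ht]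
    push_cast
    ring
  · rw [Complex.log_ofReal_mul ht Complex.I_ne_zero, Complex.log_I, Real.sign_of_pos ht,
      abs_of_pos ht]
    push_cast
    ring

lemma ofReal_mul_I_cpow {t : ℝ} (ht : t ≠ 0) (α : ℝ) :
    (t * Complex.I) ^ (α : ℂ) = (|t| ^ α : ℝ)
      * (Real.cos (π * α / 2) + Real.sign t * Real.sin (π * α / 2) * Complex.I) := by
  have hangle : (Real.cos (π * α / 2) + Real.sign t * Real.sin (π * α / 2) * Complex.I : ℂ)
      = Complex.exp ((Real.sign t * (π * α / 2) : ℝ) * Complex.I) := by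
    rw [Complex.exp_mul_I]
    rcases Real.sign_apply_eq_of_ne_zero t ht with h | h <;> simp [h]
  rw [hangle, Complex.cpow_def_of_ne_zero
    (mul_ne_zero (Complex.ofReal_ne_zero.2 ht) Complex.I_ne_zero), clog_ofReal_mul_I ht,
    Real.rpow_def_of_pos (abs_pos.2 ht), Complex.ofReal_exp, ← Complex.exp_add]
  push_cast
  ring_nf

lemma stableCumulant_one (p q d t : ℝ) :
    stableCumulant 1 p q d t
      = (-((p + q) * (π / 2) * |t|) : ℝ)
        + ((q - p) * (t * Real.log |t|) + d * t : ℝ) * Complex.I := by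
  have hneg : -(t * Complex.I) = (-t : ℝ) * Complex.I := by simp
  rw [stableCumulant, stableLaplaceExponent_one, stableLaplaceExponent_one, hneg]
  rcases eq_or_ne t 0 with rfl | ht
  · simp
  rw [clog_ofReal_mul_I ht, clog_ofReal_mul_I (neg_ne_zero.2 ht), abs_neg, Real.sign_neg,
    ← sign_mul_self_eq_abs]
  push_cast
  linear_combination ((t * Real.sign t * (p + q) * (π / 2)) : ℂ) * Complex.I_sq

lemma stableCumulant_of_ne_one {α : ℝ} (hα0 : α ≠ 0) (hα1 : α ≠ 1) (p q d t : ℝ) :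
    stableCumulant α p q d t
      = ((p + q) * Real.cos (π * α / 2) * |t| ^ α / (α * (α - 1)) : ℝ)
        + ((q - p) * Real.sign t * Real.sin (π * α / 2) * |t| ^ α / (α * (α - 1)) + d * t : ℝ)
          * Complex.I := by
  have hneg : -(t * Complex.I) = (-t : ℝ) * Complex.I := by simp
  rw [stableCumulant, stableLaplaceExponent_of_ne_one hα1, stableLaplaceExponent_of_ne_one hα1,
    hneg]
  rcases eq_or_ne t 0 with rfl | ht
  · simp [hα0]
  rw [ofReal_mul_I_cpow ht, ofReal_mul_I_cpow (neg_ne_zero.2 ht), abs_neg, Real.sign_neg]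
  push_cast
  ring

/-- The total jump intensity of the `α`-stable law with scale `σ`, in the normalization of
`stableCumulant`. The value at `α = 1` is the limit of the general formula. -/
noncomputable def stableIntensity (σ α : ℝ) : ℝ :=
  if α = 1 then 2 * σ / π else σ ^ α * (α * (1 - α)) / Real.cos (π * α / 2)

lemma one_sub_mul_cos_pos {α : ℝ} (hα0 : 0 < α) (hα2 : α < 2) (h1 : α ≠ 1) :
    0 < (1 - α) * Real.cos (π * α / 2) := by
  have hπ := Real.pi_pos
  rcases lt_or_gt_of_ne h1 with h | h
  · exact mul_pos (by linarith) (Real.cos_pos_of_mem_Ioo ⟨by nlinarith, by nlinarith⟩)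
  · exact mul_pos_of_neg_of_neg (by linarith)
      (Real.cos_neg_of_pi_div_two_lt_of_lt (by nlinarith) (by nlinarith))

lemma stableIntensity_pos {σ α : ℝ} (hσ : 0 < σ) (hα0 : 0 < α) (hα2 : α < 2) :
    0 < stableIntensity σ α := by
  unfold stableIntensity
  split_ifs with h1
  · positivity
  · have hcos := one_sub_mul_cos_pos hα0 hα2 h1
    have hcos0 : Real.cos (π * α / 2) ≠ 0 := right_ne_zero_of_mul hcos.ne'
    rw [show σ ^ α * (α * (1 - α)) / Real.cos (π * α / 2)
      = σ ^ α * α * ((1 - α) * Real.cos (π * α / 2)) / Real.cos (π * α / 2) ^ 2 by field_simp]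
    positivity

variable {θ : Fin 4 → ℝ}

lemma psiM_of_eq_one (hσ : 0 < θ 1) (hα1 : θ 2 = 1) (t : ℝ) :
    psiM θ t = (-(θ 1 * |t|) : ℝ)
      + (-(2 * θ 3 * θ 1 / π * (t * Real.log |t|))
        + (θ 0 - 2 * θ 3 * θ 1 / π * Real.log (θ 1)) * t : ℝ) * Complex.I := by
  rw [psiM, if_pos hα1]
  rcases eq_or_ne t 0 with rfl | ht
  · simp
  rw [abs_mul, abs_of_pos hσ, Real.log_mul hσ.ne' (abs_pos.2 ht).ne']
  push_cast
  ring

lemma psiM_of_ne_one (hσ : 0 < θ 1) (hα0 : θ 2 ≠ 0) (hα1 : θ 2 ≠ 1) (t : ℝ) :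
    psiM θ t = (-(θ 1 ^ θ 2 * |t| ^ θ 2) : ℝ)
      + (θ 1 ^ θ 2 * θ 3 * Real.sign t * Real.tan (π * θ 2 / 2) * |t| ^ θ 2
        + (θ 0 - θ 3 * θ 1 * Real.tan (π * θ 2 / 2)) * t : ℝ) * Complex.I := by
  rw [psiM, if_neg hα1]
  rcases eq_or_ne t 0 with rfl | ht
  · simp [hα0]
  have hσt : 0 < |θ 1 * t| := abs_pos.2 (mul_ne_zero hσ.ne' ht)
  have habs : |θ 1 * t| ^ θ 2 * |θ 1 * t| ^ (1 - θ 2) = θ 1 * |t| := by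
    rw [← Real.rpow_add hσt, add_sub_cancel, Real.rpow_one, abs_mul, abs_of_pos hσ]
  have hpow : |θ 1 * t| ^ θ 2 = θ 1 ^ θ 2 * |t| ^ θ 2 := by
    rw [abs_mul, abs_of_pos hσ, Real.mul_rpow hσ.le (abs_nonneg t)]
  have hsign : Real.sign t * |t| = t := by
    rw [← sign_mul_self_eq_abs, ← mul_assoc]
    rcases Real.sign_apply_eq_of_ne_zero t ht with h | h <;> simp [h]
  have hsplit : |θ 1 * t| ^ θ 2
      * (θ 3 * Real.sign t * Real.tan (π * θ 2 / 2) * (|θ 1 * t| ^ (1 - θ 2) - 1))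
      = θ 3 * θ 1 * Real.tan (π * θ 2 / 2) * t
        - θ 1 ^ θ 2 * θ 3 * Real.sign t * Real.tan (π * θ 2 / 2) * |t| ^ θ 2 := by
    linear_combination (θ 3 * Real.sign t * Real.tan (π * θ 2 / 2)) * (habs - hpow)
      + θ 3 * θ 1 * Real.tan (π * θ 2 / 2) * hsign
  rw [mul_add, mul_one, mul_left_comm, ← Complex.ofReal_mul, neg_mul, hsplit, hpow]
  push_cast
  ring

lemma exists_psiM_eq_stableCumulant (hσ : 0 < θ 1) (hα0 : 0 < θ 2) (hα2 : θ 2 < 2) :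
    ∃ d : ℝ, ∀ t, psiM θ t = stableCumulant (θ 2) (stableIntensity (θ 1) (θ 2) * (1 + θ 3) / 2)
      (stableIntensity (θ 1) (θ 2) * (1 - θ 3) / 2) d t := by
  by_cases hα1 : θ 2 = 1
  · refine ⟨θ 0 - 2 * θ 3 * θ 1 / π * Real.log (θ 1), fun t => ?_⟩
    rw [psiM_of_eq_one hσ hα1, hα1, stableCumulant_one, stableIntensity, if_pos rfl]
    refine congrArg₂ (fun a b : ℝ => (a + b * Complex.I : ℂ)) ?_ ?_ <;> field
  · refine ⟨θ 0 - θ 3 * θ 1 * Real.tan (π * θ 2 / 2), fun t => ?_⟩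
    have hcos : Real.cos (π * θ 2 / 2) ≠ 0 :=
      right_ne_zero_of_mul (one_sub_mul_cos_pos hα0 hα2 hα1).ne'
    have hα1' : θ 2 - 1 ≠ 0 := sub_ne_zero.2 hα1
    have hα0' := hα0.ne'
    rw [psiM_of_ne_one hσ hα0' hα1, stableCumulant_of_ne_one hα0' hα1, stableIntensity,
      if_neg hα1, Real.tan_eq_sin_div_cos]
    refine congrArg₂ (fun a b : ℝ => (a + b * Complex.I : ℂ)) ?_ ?_ <;> field

end StableParameters

section StableDensity

lemma integrable_exp_neg_abs_rpow {α : ℝ} (hα : 0 < α) :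
    Integrable fun t : ℝ => Real.exp (-|t| ^ α) := by
  refine (integrable_fun_norm_addHaar volume (f := fun t => Real.exp (-t ^ α))).2 ?_
  simpa using integrableOn_rpow_mul_exp_neg_rpow (s := 0) (by norm_num) hα

variable {θ : Fin 4 → ℝ}

lemma norm_phiM (t : ℝ) : ‖phiM θ t‖ = Real.exp (-|θ 1 * t| ^ θ 2) := by
  rw [phiM, Complex.norm_exp, psiM]
  congr 1
  split_ifs with hα
  · simp [hα, -mul_eq_mul_left_iff]
  · simp only [Complex.add_re, Complex.re_ofReal_mul, Complex.I_mul_re, Complex.ofReal_im]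
    simp

lemma continuous_phiM (hσ : 0 < θ 1) (hα0 : 0 < θ 2) (hα2 : θ 2 < 2) : Continuous (phiM θ) := by
  obtain ⟨d, hψ⟩ := exists_psiM_eq_stableCumulant hσ hα0 hα2
  have hφ : phiM θ = fun t => Complex.exp (stableCumulant (θ 2) _ _ d t) :=
    funext fun t => congrArg Complex.exp (hψ t)
  rw [hφ]
  exact (continuous_stableCumulant hα0 _ _ d).cexp

lemma integrable_phiM (hσ : 0 < θ 1) (hα0 : 0 < θ 2) (hα2 : θ 2 < 2) : Integrable (phiM θ) :=
  ((integrable_exp_neg_abs_rpow hα0).comp_mul_left' hσ.ne').mono'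
    (continuous_phiM hσ hα0 hα2).aestronglyMeasurable (.of_forall fun t => (norm_phiM t).le)

lemma exists_isCharFun_phiM_eq_mul (hθ : θ ∈ ThetaInt) :
    ∃ φ : ℝ → ℂ, IsCharFun φ ∧ ∃ κ : ℝ≥0, κ ≠ 0 ∧
      phiM θ = fun t => φ t * Complex.exp (κ * (charFun (gaussianReal 0 1) t - 1)) := by
  obtain ⟨hσ, ⟨hα0, hα2⟩, hβ1, hβ2⟩ := hθ
  have hK := stableIntensity_pos hσ hα0 hα2
  have hp : 0 < stableIntensity (θ 1) (θ 2) * (1 + θ 3) / 2 :=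
    half_pos (mul_pos hK (by linarith))
  have hq : 0 < stableIntensity (θ 1) (θ 2) * (1 - θ 3) / 2 :=
    half_pos (mul_pos hK (by linarith))
  obtain ⟨d, hψ⟩ := exists_psiM_eq_stableCumulant hσ hα0 hα2
  obtain ⟨κ, hκ, hφ⟩ := exists_isCharFun_cexp_stableCumulant_sub hα0 hα2 hp hq d
  refine ⟨_, hφ, κ, hκ, funext fun t => ?_⟩
  rw [phiM, hψ, ← Complex.exp_add, sub_add_cancel]

end StableDensity

/-- For every `θ` in the interior of the parameter space and every real `x`,
the (M₀) stable density is strictly positive. -/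
theorem stable_density_pos :
    ∀ θ ∈ ThetaInt, ∀ x : ℝ, 0 < fM θ x := by
  intro θ hθ x
  obtain ⟨φ, hφ, κ, hκ, hphiM⟩ := exists_isCharFun_phiM_eq_mul hθ
  have hint : Integrable (phiM θ) := integrable_phiM hθ.1 hθ.2.1.1 hθ.2.1.2
  have hpos : 0 < (inversionIntegral (phiM θ) x).re := by
    rw [hphiM] at hint ⊢
    exact hφ.inversionIntegral_mul_cexp_re_pos hκ one_ne_zero hint x
  exact mul_pos (by positivity) hpos
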